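/- Let K be an algebraically closed field of characteristic zero and let α ∈ K satisfy α² + α + 3 = 0. Then the polynomial A₁₁ = x₁⁵ − α x₁⁴x₂ − x₁³x₂² + (4α+2)x₁³ + x₁²x₂³ + (α+6)x₁²x₂ − (2α−10)x₁² − (α+1)x₁x₂⁴ + (α−5)x₁x₂² − (12α+6)x₁x₂ + (8α−7)x₁ − x₂⁵ + (4α+2)x₂³ − (2α+12)x₂² + (8α+15)x₂ + 12α + 6 is irreducible in K[x₁,x₂]. -/

import Mathlib

/-!
Write `F` for the polynomial, with homogeneous components `F₅, F₃, F₂, F₁, F₀` (there is no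
component of degree four). The substitution `x₁ = u t`, `x₂ = t` sends `F` to
`f₅ t⁵ + f₃ t³ + f₂ t² + f₁ t + f₀` in `K[u][t]`, where `f_d = F_d(u, 1)` has degree at most `d`
(`dehom_A₁₁`, `natDegree_coeff_dehom_le`), and it is injective (`dehom_injective`).

Suppose `F = A B`, with `A` of degree at most two and not constant. The form `f₅` is separable of degree five, so the leading forms `a`, `b` of the
two factors are coprime, and vanishing of the degree-four component forces the subleading forms to
be divisible by `a` and `b` respectively, hence, for degree reasons, to vanish.
* If `A` has degree one, then `A` is homogeneous, and it divides the nonzero constant `F₀`.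
* If `A` has degree two, then comparing components of degree two gives `a ∣ f₂`, while `a ∣ f₅`;
  but `f₂` and `f₅` are coprime.

Both coprimality statements are explicit Bézout identities over `ℤ[α]`.
-/

/-! ### Dehomogenization with a grading variable -/

section Dehomogenization

variable {K : Type*} [Field K]

/-- The substitution `x₁ ↦ u t`, `x₂ ↦ t` from `K[x₁, x₂]` to `K[u][t]`. The coefficient of `t ^ d`
in the image is the degree-`d` homogeneous component evaluated at `(u, 1)`. -/
noncomputable def dehom : MvPolynomial (Fin 2) K →ₐ[K] Polynomial (Polynomial K) :=
  MvPolynomial.aeval ![Polynomial.C Polynomial.X * Polynomial.X, Polynomial.X]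

lemma dehom_X0 : dehom (K := K) (MvPolynomial.X 0) =
    Polynomial.C Polynomial.X * Polynomial.X := by
  simp [dehom]

lemma dehom_X1 : dehom (K := K) (MvPolynomial.X 1) = Polynomial.X := by
  simp [dehom]

lemma dehom_C (k : K) : dehom (MvPolynomial.C k) = Polynomial.C (Polynomial.C k) := by
  simp [dehom, Polynomial.algebraMap_apply]

lemma natDegree_coeff_dehom_le (p : MvPolynomial (Fin 2) K) :
    ∀ d, ((dehom p).coeff d).natDegree ≤ d := by
  induction p using MvPolynomial.induction_on with
  | C k =>
    intro d
    rw [dehom_C, Polynomial.coeff_C]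
    split_ifs <;> simp
  | add p q hp hq =>
    intro d
    rw [map_add, Polynomial.coeff_add]
    exact (Polynomial.natDegree_add_le _ _).trans (max_le (hp d) (hq d))
  | mul_X p i hp =>
    intro d
    fin_cases i
    · simp only [Fin.zero_eta, map_mul, dehom_X0]
      rw [← mul_assoc]
      cases d with
      | zero => simp
      | succ d =>
        rw [Polynomial.coeff_mul_X, Polynomial.coeff_mul_C]
        refine Polynomial.natDegree_mul_le.trans ?_
        simpa using hp d
    · simp only [Fin.mk_one, map_mul, dehom_X1]
      cases d with
      | zero => simp
      | succ d =>
        rw [Polynomial.coeff_mul_X]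
        exact (hp d).trans (Nat.le_succ d)

lemma eval_eval_dehom (p : MvPolynomial (Fin 2) K) (s t : K) :
    ((dehom p).eval (Polynomial.C t)).eval s = MvPolynomial.eval ![s * t, t] p := by
  induction p using MvPolynomial.induction_on with
  | C k => simp
  | add p q hp hq => simp [hp, hq]
  | mul_X p i hp => fin_cases i <;> simp [hp, dehom_X0, dehom_X1, mul_comm t s]

lemma dehom_injective [Infinite K] : Function.Injective (dehom (K := K)) := by
  rw [injective_iff_map_eq_zero]
  intro p hp
  -- `p` vanishes at every point with nonzero second coordinate
  have h : p * MvPolynomial.X 1 = 0 := by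
    apply MvPolynomial.funext
    intro v
    by_cases hv : v 1 = 0
    · simp [hv]
    · have h1 := eval_eval_dehom p (v 0 / v 1) (v 1)
      have h2 : ![v 0 / v 1 * v 1, v 1] = v := by
        ext i
        fin_cases i <;> simp [hv]
      rw [hp, h2] at h1
      simp [← h1]
  exact (mul_eq_zero.mp h).resolve_right (MvPolynomial.X_ne_zero 1)

lemma isUnit_of_natDegree_dehom_eq_zero [Infinite K] {p : MvPolynomial (Fin 2) K}
    (hp : p ≠ 0) (h : (dehom p).natDegree = 0) : IsUnit p := by
  have h1 := Polynomial.eq_C_of_natDegree_eq_zero h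
  have h2 := Polynomial.eq_C_of_natDegree_le_zero (natDegree_coeff_dehom_le p 0)
  rw [h2, ← dehom_C] at h1
  have h3 := dehom_injective h1
  rw [h3]
  refine IsUnit.map MvPolynomial.C (isUnit_iff_ne_zero.mpr fun h0 => hp ?_)
  rw [h3, h0, map_zero]

end Dehomogenization

/-! ### Components of the polynomial and coprimality -/

section Components

open Polynomial

variable {K : Type*} [Field K]

/-- The leading form of the polynomial, at `(u, 1)`. -/
noncomputable def lead5 (α : K) : K[X] :=
  X ^ 5 - C α * X ^ 4 - X ^ 3 + X ^ 2 - C (α + 1) * X - 1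

/-- The homogeneous component of degree two, at `(u, 1)`. -/
noncomputable def comp2 (α : K) : K[X] :=
  -C (2 * α - 10) * X ^ 2 - C (12 * α + 6) * X - C (2 * α + 12)

lemma natDegree_lead5 (α : K) : (lead5 α).natDegree = 5 := by
  unfold lead5
  compute_degree!

lemma C_sq_add (α : K) (hα : α ^ 2 + α + 3 = 0) : (C α : K[X]) ^ 2 + C α + 3 = 0 := by
  have h := congrArg (C : K → K[X]) hα
  simpa only [map_add, map_pow, map_ofNat, map_zero] using h

lemma isCoprime_of_eq_C {p q r s : K[X]} {n : K} (hn : n ≠ 0) (h : r * p + s * q = C n) :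
    IsCoprime p q :=
  ⟨C n⁻¹ * r, C n⁻¹ * s, by
    rw [mul_assoc, mul_assoc, ← mul_add, h, ← C_mul, inv_mul_cancel₀ hn, C_1]⟩

lemma separable_lead5 [CharZero K] (α : K) (hα : α ^ 2 + α + 3 = 0) :
    (lead5 α).Separable := by
  have hc := C_sq_add α hα
  refine isCoprime_of_eq_C (n := (11 : K)) (by norm_num) (r := (-13 + 7 * C α) + (2 + 4 * C α) * X
    + (29 + 3 * C α) * X ^ 2 + (-50 + 10 * C α) * X ^ 3)
    (s := (-7 - 3 * C α) + (3 - 5 * C α) * X + (1 + 2 * C α) * X ^ 2 + (-7 - 3 * C α) * X ^ 3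
    + (10 - 2 * C α) * X ^ 4) ?_
  simp only [lead5, derivative_sub, derivative_mul, derivative_C, derivative_X_pow,
    derivative_X, derivative_one, map_add, map_ofNat, map_natCast, C_1]
  push_cast
  generalize C α = c at *
  linear_combination (3 - 2 * X - 6 * X ^ 2 + 12 * X ^ 3 + 5 * X ^ 4 - 12 * X ^ 5 + 9 * X ^ 6
    - 2 * X ^ 7) * hc

lemma isCoprime_comp2_lead5 [CharZero K] (α : K) (hα : α ^ 2 + α + 3 = 0) :
    IsCoprime (comp2 α) (lead5 α) := by
  have hc := C_sq_add α hα
  refine isCoprime_of_eq_C (n := (22 : K)) (by norm_num) (r := (-19 + 6 * C α)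
    + (-11 - 11 * C α) * X + (13 + 4 * C α) * X ^ 2 + (-23 - 2 * C α) * X ^ 3
    + (-1 - 13 * C α) * X ^ 4)
    (s := (242 - 22 * C α) + (88 + 154 * C α) * X) ?_
  simp only [lead5, comp2, map_add, map_sub, map_mul, map_ofNat, C_1]
  generalize C α = c at *
  linear_combination (-12 - 28 * X - 42 * X ^ 2 - 22 * X ^ 3 + 64 * X ^ 4 + 6 * X ^ 5
    + 26 * X ^ 6) * hc

/-- The image of the polynomial under `dehom`, sorted by powers of `t`. -/
lemma dehom_A₁₁ (α : K) :
    dehom (MvPolynomial.X 0 ^ 5 - MvPolynomial.C α * MvPolynomial.X 0 ^ 4 * MvPolynomial.X 1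
        - MvPolynomial.X 0 ^ 3 * MvPolynomial.X 1 ^ 2
        + MvPolynomial.C (4*α + 2) * MvPolynomial.X 0 ^ 3
        + MvPolynomial.X 0 ^ 2 * MvPolynomial.X 1 ^ 3
        + MvPolynomial.C (α + 6) * MvPolynomial.X 0 ^ 2 * MvPolynomial.X 1
        - MvPolynomial.C (2*α - 10) * MvPolynomial.X 0 ^ 2
        - MvPolynomial.C (α + 1) * MvPolynomial.X 0 * MvPolynomial.X 1 ^ 4
        + MvPolynomial.C (α - 5) * MvPolynomial.X 0 * MvPolynomial.X 1 ^ 2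
        - MvPolynomial.C (12*α + 6) * MvPolynomial.X 0 * MvPolynomial.X 1
        + MvPolynomial.C (8*α - 7) * MvPolynomial.X 0 - MvPolynomial.X 1 ^ 5
        + MvPolynomial.C (4*α + 2) * MvPolynomial.X 1 ^ 3
        - MvPolynomial.C (2*α + 12) * MvPolynomial.X 1 ^ 2
        + MvPolynomial.C (8*α + 15) * MvPolynomial.X 1
        + MvPolynomial.C (12*α + 6)) =
      C (lead5 α) * X ^ 5
        + C (C (4*α + 2) * X ^ 3 + C (α + 6) * X ^ 2 + C (α - 5) * X + C (4*α + 2)) * X ^ 3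
        + C (comp2 α) * X ^ 2
        + C (C (8*α - 7) * X + C (8*α + 15)) * X + C (C (12*α + 6)) := by
  simp only [map_add, map_sub, map_mul, map_pow, dehom_X0, dehom_X1, dehom_C, lead5, comp2,
    map_neg, map_one, map_ofNat]
  ring

/-! ### Excluding factors of degree one and two -/

/-- In a factorization of the shape forced by `dehom`, a factor of `t`-degree at most two has
`t`-degree zero. -/
lemma natDegree_eq_zero_of_mul_eq [CharZero K] (α : K) (hα : α ^ 2 + α + 3 = 0)
    {P Q : K[X][X]} {f3 f1 : K[X]}
    (hP : ∀ d, (P.coeff d).natDegree ≤ d) (hQ : ∀ d, (Q.coeff d).natDegree ≤ d)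
    (h : P * Q = C (lead5 α) * X ^ 5 + C f3 * X ^ 3 + C (comp2 α) * X ^ 2 + C f1 * X
      + C (C (12 * α + 6)))
    (hPQ : P.natDegree + Q.natDegree = 5) (hle : P.natDegree ≤ 2) : P.natDegree = 0 := by
  have hsep := separable_lead5 α hα
  have hdeg := natDegree_lead5 α
  have h0 := congrArg (fun R => R.coeff 0) h
  have h2 := congrArg (fun R => R.coeff 2) h
  have h4 := congrArg (fun R => R.coeff 4) h
  have h5 := congrArg (fun R => R.coeff 5) h
  simp [coeff_mul, Finset.Nat.antidiagonal_succ, coeff_X, coeff_X_pow, coeff_C] at h0 h2 h4 h5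
  have hPz : ∀ n, P.natDegree < n → P.coeff n = 0 := fun n => coeff_eq_zero_of_natDegree_lt
  have hQz : ∀ n, Q.natDegree < n → Q.coeff n = 0 := fun n => coeff_eq_zero_of_natDegree_lt
  have hf5 : lead5 α ≠ 0 := hsep.ne_zero
  obtain hn | hn | hn : P.natDegree = 0 ∨ P.natDegree = 1 ∨ P.natDegree = 2 := by omega
  · exact hn
  · exfalso
    rw [hPz 2 (by omega), hPz 3 (by omega), hPz 4 (by omega), hPz 5 (by omega),
      hQz 5 (by omega)] at h5
    rw [hPz 2 (by omega), hPz 3 (by omega), hPz 4 (by omega)] at h4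
    have h5' : P.coeff 1 * Q.coeff 4 = lead5 α := by linear_combination h5
    have hcop : IsCoprime (P.coeff 1) (Q.coeff 4) := (h5' ▸ hsep).isCoprime
    have hdvd : P.coeff 1 ∣ P.coeff 0 :=
      hcop.dvd_of_dvd_mul_right ⟨-Q.coeff 3, by linear_combination h4⟩
    -- the constant term `12 α + 6` is nonzero because its square is `-396`
    have hne : 12 * α + 6 ≠ 0 := by
      intro hz
      have : (396 : K) = 0 := by linear_combination 144 * hα - (12 * α + 6) * hz
      norm_num at this
    have hu0 : IsUnit (P.coeff 0) := by
      refine isUnit_of_dvd_unit ⟨Q.coeff 0, ?_⟩ (isUnit_C.mpr (isUnit_iff_ne_zero.mpr hne))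
      simpa using h0.symm
    have hu : (P.coeff 1).natDegree = 0 :=
      natDegree_eq_zero_of_isUnit (isUnit_of_dvd_unit hdvd hu0)
    have hd := natDegree_mul_le (p := P.coeff 1) (q := Q.coeff 4)
    rw [h5', hdeg, hu] at hd
    have := hQ 4
    omega
  · exfalso
    rw [hPz 3 (by omega), hPz 4 (by omega), hPz 5 (by omega),
      hQz 5 (by omega), hQz 4 (by omega)] at h5
    rw [hPz 3 (by omega), hPz 4 (by omega), hQz 4 (by omega)] at h4
    have h5' : P.coeff 2 * Q.coeff 3 = lead5 α := by linear_combination h5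
    have hd := natDegree_mul_le (p := P.coeff 2) (q := Q.coeff 3)
    rw [h5', hdeg] at hd
    have hd2 : (P.coeff 2).natDegree = 2 := by
      have := hP 2
      have := hQ 3
      omega
    have hcop : IsCoprime (P.coeff 2) (Q.coeff 3) := (h5' ▸ hsep).isCoprime
    have hdvd : P.coeff 2 ∣ P.coeff 1 :=
      hcop.dvd_of_dvd_mul_right ⟨-Q.coeff 2, by linear_combination h4⟩
    have hP1 : P.coeff 1 = 0 := by
      refine eq_zero_of_dvd_of_natDegree_lt hdvd ?_
      have := hP 1
      omega
    have hP2 : P.coeff 2 ≠ 0 := by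
      rintro hz
      rw [hz, zero_mul] at h5'
      exact hf5 h5'.symm
    have hQ2 : Q.coeff 2 = 0 := by
      refine (mul_eq_zero.mp (?_ : P.coeff 2 * Q.coeff 2 = 0)).resolve_left hP2
      rw [hP1] at h4
      linear_combination h4
    rw [hP1, hQ2] at h2
    have hu : IsUnit (P.coeff 2) := by
      refine (isCoprime_comp2_lead5 α hα).isUnit_of_dvd' ⟨Q.coeff 0, ?_⟩ ⟨_, h5'.symm⟩
      linear_combination -h2
    have := natDegree_eq_zero_of_isUnit hu
    omega

end Components

open MvPolynomial in
/-- Let `K` be an algebraically closed field of characteristic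
zero and let `α ∈ K` satisfy `α² + α + 3 = 0`.  Then the factor `A₁₁` of
`f₁₁(x₁) − f₁₁^σ(x₂)` is irreducible in `K[x₁,x₂]`. -/
theorem A₁₁_irreducible
    {K : Type*} [Field K] [CharZero K] [IsAlgClosed K] (α : K)
    (hα : α^2 + α + 3 = 0) :
    Irreducible
      (X 0 ^ 5 - C α * X 0 ^ 4 * X 1 - X 0 ^ 3 * X 1 ^ 2 + C (4*α + 2) * X 0 ^ 3
        + X 0 ^ 2 * X 1 ^ 3 + C (α + 6) * X 0 ^ 2 * X 1 - C (2*α - 10) * X 0 ^ 2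
        - C (α + 1) * X 0 * X 1 ^ 4 + C (α - 5) * X 0 * X 1 ^ 2
        - C (12*α + 6) * X 0 * X 1 + C (8*α - 7) * X 0 - X 1 ^ 5
        + C (4*α + 2) * X 1 ^ 3 - C (2*α + 12) * X 1 ^ 2 + C (8*α + 15) * X 1
        + C (12*α + 6) : MvPolynomial (Fin 2) K) := by
  have hdeg : ∀ f3 f1 : Polynomial K, (Polynomial.C (lead5 α) * Polynomial.X ^ 5
      + Polynomial.C f3 * Polynomial.X ^ 3 + Polynomial.C (comp2 α) * Polynomial.X ^ 2
      + Polynomial.C f1 * Polynomial.X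
      + Polynomial.C (Polynomial.C (12 * α + 6))).natDegree = 5 := by
    intro f3 f1
    have : lead5 α ≠ 0 := (separable_lead5 α hα).ne_zero
    compute_degree!
  have hF := dehom_A₁₁ α
  constructor
  · intro hu
    have h := Polynomial.natDegree_eq_zero_of_isUnit (hu.map dehom)
    rw [hF, hdeg] at h
    omega
  · intro A B hAB
    rw [hAB, map_mul] at hF
    have hne : dehom A * dehom B ≠ 0 := by
      intro hz
      have h := congrArg Polynomial.natDegree hF
      rw [hz, hdeg] at h
      simp at h
    have hA := left_ne_zero_of_mul hne
    have hB := right_ne_zero_of_mul hne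
    have hsum : (dehom A).natDegree + (dehom B).natDegree = 5 := by
      rw [← Polynomial.natDegree_mul hA hB, hF, hdeg]
    have hA0 : A ≠ 0 := fun hz => hA (by rw [hz, map_zero])
    have hB0 : B ≠ 0 := fun hz => hB (by rw [hz, map_zero])
    rcases Nat.lt_or_ge 2 (dehom A).natDegree with hlt | hle
    · right
      refine isUnit_of_natDegree_dehom_eq_zero hB0 ?_
      rw [mul_comm] at hF
      exact natDegree_eq_zero_of_mul_eq α hα (natDegree_coeff_dehom_le B)
        (natDegree_coeff_dehom_le A) hF (by omega) (by omega)
    · left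
      exact isUnit_of_natDegree_dehom_eq_zero hA0
        (natDegree_eq_zero_of_mul_eq α hα (natDegree_coeff_dehom_le A)
          (natDegree_coeff_dehom_le B) hF hsum hle)
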